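/- For p ∈ [1 - q/(d+1), 1) ∩ (0,1), integers d ≥ 1, 1 ≤ m ≤ q-1, x = 1 is the unique solution on [1,∞) of (f_m ∘ f_m)'(x) = (d(1-p)/(p+q-1))², where f_m(x) = ((B + (m-1+p)(x-1))/(B + m(x-1)))^d and B = p+q-1. -/

import Mathlib

lemma aux_pow (t : ℝ) (h0 : 0 < t) (h1 : t < 1) (d : ℕ) :
    2 - ((d : ℝ) + 1) * t ≤ (1 - t) ^ d * (2 + ((d : ℝ) - 1) * t) := by
  induction d with
  | zero => norm_num
  | succ d ih =>
    push_cast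
    have hd : (0 : ℝ) ≤ d := Nat.cast_nonneg d
    have hpos : 0 < 2 + ((d : ℝ) - 1) * t := by nlinarith
    have h2 : 0 ≤ (1 - t) * (2 + (d : ℝ) * t) := by
      have := mul_nonneg hd h0.le
      apply mul_nonneg <;> linarith
    have h3 := mul_le_mul_of_nonneg_right ih h2
    have h4 : 0 ≤ (d : ℝ) * (d + 1) * t ^ 3 := by positivity
    rw [pow_succ]
    have h5 : (2 - ((d : ℝ) + 2) * t) * (2 + ((d : ℝ) - 1) * t) ≤
        ((1 - t) ^ d * (1 - t) * (2 + (d : ℝ) * t)) * (2 + ((d : ℝ) - 1) * t) := by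
      linear_combination h3 + h4
    have h6 := le_of_mul_le_mul_right h5 hpos
    linear_combination h6

lemma aux_lin (d : ℕ) (hd : 1 ≤ d) (m c B s t w : ℝ) (hm : 0 < m) (hc : 0 < c)
    (hcB : c < B) (hdc : d * c ≤ B) (hs : 0 < s) (ht : t = c * s) (ht1 : t < 1)
    (hw : w = 1 - (1 - t) ^ d) :
    ((d : ℝ) - 1) * ((1 - t) * (B - (m - c) * w)) + 2 * (B * (1 - m * s))
      < ((d : ℝ) + 1) * (B - m * w) := by
  have ht0 : 0 < t := by rw [ht]; positivity
  rcases Nat.lt_or_ge 1 d with h | h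
  · have hd2 : (1 : ℝ) < d := by exact_mod_cast h
    have hw0 : 0 < w := by
      have : (1 - t) ^ d < 1 := pow_lt_one₀ (by linarith) (by linarith) (by omega)
      linarith
    have hwd : w ≤ d * t := by
      have := one_add_mul_le_pow (a := -t) (by linarith) d
      rw [← sub_eq_add_neg] at this
      linarith
    have hl := aux_pow t ht0 ht1 d
    have hl' : ((d : ℝ) - 1) * t * w + 2 * w - 2 * d * t ≤ 0 := by
      rw [hw]; linarith
    have e1 : d * t ≤ B * s := by rw [ht]; nlinarith
    have a1 := mul_nonneg hm.le (sub_nonneg.2 hl')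
    have a2 := mul_nonneg hm.le (sub_nonneg.2 e1)
    have a3 := mul_nonneg (mul_nonneg (sub_nonneg.2 hd2.le) hc.le) (sub_nonneg.2 e1)
    have a4 := mul_nonneg (mul_nonneg (sub_nonneg.2 hd2.le) hc.le) (sub_nonneg.2 hwd)
    have a5 : 0 < ((d : ℝ) - 1) * c * (t * w) := by
      have := sub_pos.2 hd2
      positivity
    have e2 : t * B = c * (B * s) := by rw [ht]; ring
    linear_combination a1 + 2 * a2 + a3 + a4 + a5 - ((d : ℝ) - 1) * e2
  · have : d = 1 := by omega
    subst this
    have : w = c * s := by rw [hw, ht]; simp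
    rw [this]
    have := mul_pos hm (mul_pos hs (sub_pos.2 hcB))
    push_cast
    nlinarith

lemma aux_exp (n : ℕ) (A C : ℝ) (hA : 0 < A) (hC : 0 < C)
    (h : (n : ℝ) * (A - 1) + 2 * (C - 1) < 0) : A ^ n * C ^ 2 < 1 := by
  have h1 : A ≤ Real.exp (A - 1) := by have := Real.add_one_le_exp (A - 1); linarith
  have h2 : C ≤ Real.exp (C - 1) := by have := Real.add_one_le_exp (C - 1); linarith
  calc A ^ n * C ^ 2 ≤ Real.exp (A - 1) ^ n * Real.exp (C - 1) ^ 2 := by gcongr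
    _ = Real.exp ((n : ℝ) * (A - 1) + 2 * (C - 1)) := by
      rw [Real.exp_add, Real.exp_nat_mul, ← Real.exp_nat_mul (C - 1) 2]; norm_num
    _ < 1 := by rwa [Real.exp_lt_one_iff]

theorem fmfm_deriv_eq_iff (d q m : ℕ) (hd : 1 ≤ d) (hq : 2 ≤ q)
    (hm1 : 1 ≤ m) (hmq : m ≤ q - 1)
    (p : ℝ) (hp0 : 0 < p) (hp1 : p < 1) (hpc : 1 - (q : ℝ) / ((d : ℝ) + 1) ≤ p)
    (B : ℝ) (hB : B = p + (q : ℝ) - 1)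
    (fm : ℝ → ℝ)
    (hfm : ∀ x : ℝ, fm x =
      ((B + ((m : ℝ) - 1 + p) * (x - 1)) / (B + (m : ℝ) * (x - 1))) ^ d) :
    ∀ x : ℝ, 1 ≤ x →
      (deriv (fm ∘ fm) x = ((d : ℝ) * (1 - p) / (p + (q : ℝ) - 1)) ^ 2 ↔ x = 1) := by
  intro x hx
  rw [← hB]
  have hmR : (1 : ℝ) ≤ m := by exact_mod_cast hm1
  have hmq' : (m : ℝ) + 1 ≤ q := by
    have : m + 1 ≤ q := by omega
    exact_mod_cast this
  have hmB : (m : ℝ) < B := by linarith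
  have hB0 : 0 < B := by linarith
  have hdc : (d : ℝ) * (1 - p) ≤ B := by
    have hd1 : (0 : ℝ) < (d : ℝ) + 1 := by positivity
    have : 1 - p ≤ (q : ℝ) / ((d : ℝ) + 1) := by linarith
    rw [le_div_iff₀ hd1] at this
    linarith
  have hdR : (1 : ℝ) ≤ d := by exact_mod_cast hd
  have hder : ∀ z : ℝ, 0 < B + (m : ℝ) * (z - 1) → HasDerivAt fm
      (-(d * (1 - p) / B) * (((B + ((m : ℝ) - 1 + p) * (z - 1)) / (B + (m : ℝ) * (z - 1))) ^ (d - 1)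
        * (B / (B + (m : ℝ) * (z - 1))) ^ 2)) z := by
    intro z hz
    have e : fm = fun x => ((B + ((m : ℝ) - 1 + p) * (x - 1)) / (B + (m : ℝ) * (x - 1))) ^ d :=
      funext hfm
    rw [e]
    have h1 : HasDerivAt (fun x : ℝ => B + ((m : ℝ) - 1 + p) * (x - 1)) ((m : ℝ) - 1 + p) z := by
      simpa using (((hasDerivAt_id z).sub_const 1).const_mul ((m : ℝ) - 1 + p)).const_add B
    have h2 : HasDerivAt (fun x : ℝ => B + (m : ℝ) * (x - 1)) (m : ℝ) z := by
      simpa using (((hasDerivAt_id z).sub_const 1).const_mul (m : ℝ)).const_add B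
    refine HasDerivAt.congr_deriv ((h1.fun_div h2 hz.ne').fun_pow d) ?_
    generalize ((B + ((m : ℝ) - 1 + p) * (z - 1)) / (B + (m : ℝ) * (z - 1))) ^ (d - 1) = G
    field_simp
    ring
  have hxp : 0 < B + (m : ℝ) * (x - 1) := by nlinarith
  rcases hx.eq_or_lt with rfl | hx1
  · have hf1 : fm 1 = 1 := by rw [hfm]; simp [hB0.ne']
    have h := hder 1 (by simpa using hB0)
    have hc : HasDerivAt (fm ∘ fm) _ 1 := HasDerivAt.comp 1 (by rw [hf1]; exact h) h
    rw [hc.deriv]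
    simp [hB0.ne']
    ring
  · refine ⟨fun hEq => ?_, fun h => absurd h hx1.ne'⟩
    exfalso
    set u := x - 1 with hu
    have hu0 : 0 < u := by linarith
    set s := u / (B + m * u) with hs
    have hs0 : 0 < s := by positivity
    set t := (1 - p) * s with ht
    have hms : m * s < 1 := by
      rw [hs, mul_div_assoc', div_lt_one hxp]; linarith
    have ht0 : 0 < t := mul_pos (by linarith) hs0
    have ht1 : t < 1 := by nlinarith
    set w := 1 - (1 - t) ^ d with hw
    have hG : (B + ((m : ℝ) - 1 + p) * u) / (B + (m : ℝ) * u) = 1 - t := by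
      rw [ht, hs]; field_simp; ring
    have hn : B / (B + (m : ℝ) * u) = 1 - m * s := by
      rw [hs]; field_simp; ring
    have hy : fm x = 1 - w := by rw [hfm, hG, hw]; ring
    have hw1 : w < 1 := by
      have : 0 < (1 - t) ^ d := pow_pos (by linarith) d
      linarith
    have hw0 : 0 < w := by
      have : (1 - t) ^ d < 1 := pow_lt_one₀ (by linarith) (by linarith) (by omega)
      linarith
    have hD : 0 < B - m * w := by nlinarith
    have hE : 0 < B - (m - (1 - p)) * w := by nlinarith
    have hx' := hder x hxp
    have hy' := hder (fm x) (by rw [hy]; linarith)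
    have hc := hy'.comp x hx'
    rw [hc.deriv, ← hu, hG, hn, hy] at hEq
    have hlin := aux_lin d hd m (1 - p) B s t w (by linarith) (by linarith) (by linarith) hdc hs0
      ht ht1 hw
    have key := aux_exp (d - 1) ((1 - t) * ((B - (m - (1 - p)) * w) / (B - m * w)))
      ((1 - m * s) * (B / (B - m * w)))
      (mul_pos (by linarith) (div_pos hE hD)) (mul_pos (by linarith) (div_pos hB0 hD))
      (by
        rw [Nat.cast_sub hd, Nat.cast_one]
        have : ((d : ℝ) - 1) * ((1 - t) * ((B - (m - (1 - p)) * w) / (B - m * w)) - 1) +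
            2 * ((1 - m * s) * (B / (B - m * w)) - 1) =
            (((d : ℝ) - 1) * ((1 - t) * (B - (m - (1 - p)) * w)) + 2 * (B * (1 - m * s))
              - ((d : ℝ) + 1) * (B - m * w)) / (B - m * w) := by
          field_simp
          ring
        rw [this]
        exact div_neg_of_neg_of_pos (by linarith) hD)
    have hk : 0 < ((d : ℝ) * (1 - p) / B) ^ 2 := by
      have : 0 < 1 - p := by linarith
      positivity
    have e1 : B + ((m : ℝ) - 1 + p) * (1 - w - 1) = B - (m - (1 - p)) * w := by ring
    have e2 : B + (m : ℝ) * (1 - w - 1) = B - m * w := by ring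
    rw [e1, e2] at hEq
    rw [mul_pow, mul_pow] at key
    have := mul_lt_mul_of_pos_left key hk
    linarith
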